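/- Coprimality of the two Schur polynomials (key step of the lemma that a generic point of the secant variety lies on a unique secant line): Let 0 < i_1 < i_2 < i_3 < i_4 be integers with gcd(i_1, i_2, i_3, i_4) = 1. If S, S' ∈ ℂ[x_0, x_1, x_2, x_3] satisfy V·S = D_{i_1,i_2,i_3} and V·S' = D_{i_1,i_2,i_4}, then S and S' are relatively prime, i.e. every common divisor of S and S' in ℂ[x_0, x_1, x_2, x_3] is a unit. -/

import Mathlib

open MvPolynomial

/-- The Vandermonde polynomial `V = ∏_{0 ≤ p < q ≤ 3} (x_q − x_p)` in `ℂ[x_0,x_1,x_2,x_3]`. -/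
noncomputable def Vand : MvPolynomial (Fin 4) ℂ :=
  ∏ p : Fin 4, ∏ q : Fin 4, if p < q then (X q - X p) else 1

/-- The determinant `D_{a,b,c}` of the 4×4 generalized Vandermonde matrix whose row
indexed by `p` is `(1, x_p^a, x_p^b, x_p^c)`. -/
noncomputable def genVandDet (a b c : ℕ) : MvPolynomial (Fin 4) ℂ :=
  (Matrix.of fun p q : Fin 4 =>
    ![(1 : MvPolynomial (Fin 4) ℂ), X p ^ a, X p ^ b, X p ^ c] q).det

/-- Generalized Vandermonde determinant with exponents `a`. -/
noncomputable def gv {n : ℕ} (a : Fin n → ℕ) : MvPolynomial (Fin n) ℂ :=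
  (Matrix.of fun p q : Fin n => (X p : MvPolynomial (Fin n) ℂ) ^ a q).det

/-- The linear form `x_q - ζ x_p`. -/
noncomputable def lf {n : ℕ} (p q : Fin n) (z : ℂ) : MvPolynomial (Fin n) ℂ :=
  X q - C z * X p

lemma lf_irreducible {n : ℕ} {p q : Fin n} (hpq : p ≠ q) (z : ℂ) : Irreducible (lf p q z) := by
  have h := irreducible_mul_X_add (1 : MvPolynomial (Fin n) ℂ) (- (C z * X p)) q one_ne_zero
    (by simp) (by
      rw [vars_neg]
      intro h
      have := vars_mul _ _ h
      simp at this
      exact hpq this.symm) isRelPrime_one_left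
  simpa [lf, sub_eq_add_neg] using h

lemma rename_gv {n : ℕ} (a : Fin n → ℕ) (s : Equiv.Perm (Fin n)) :
    Associated (rename s (gv a)) (gv a) := by
  have h1 : rename s (gv a) = ((Matrix.of fun p q : Fin n =>
      (X p : MvPolynomial (Fin n) ℂ) ^ a q).submatrix s id).det := by
    rw [gv, AlgHom.map_det]
    congr 1
    ext1 p q
    simp
  rw [h1, Matrix.det_permute]
  change Associated (_ * gv a) (gv a)
  rcases Int.units_eq_one_or (Equiv.Perm.sign s) with h | h
  · simp [h]
  · simp [h]

lemma rename_lf {n m : ℕ} (s : Fin n → Fin m) (p q : Fin n) (z : ℂ) :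
    rename s (lf p q z) = lf (s p) (s q) z := by
  simp [lf]

lemma finSuccEquiv_lf {n : ℕ} (p q : Fin n) (z : ℂ) :
    finSuccEquiv ℂ n (lf p.succ q.succ z) = Polynomial.C (lf p q z) := by
  simp [lf, finSuccEquiv_apply]

lemma finSuccEquiv_gv {n : ℕ} (a : Fin (n + 1) → ℕ) :
    finSuccEquiv ℂ n (gv a) = ∑ j : Fin (n + 1),
      Polynomial.monomial (a j) ((-1) ^ (j : ℕ) * gv (a ∘ j.succAbove)) := by
  rw [gv, Matrix.det_succ_row_zero, map_sum]
  refine Finset.sum_congr rfl fun j _ => ?_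
  have h1 : finSuccEquiv ℂ n ((Matrix.of fun p q : Fin (n + 1) =>
      (X p : MvPolynomial (Fin (n + 1)) ℂ) ^ a q).submatrix Fin.succ j.succAbove).det
      = Polynomial.C (gv (a ∘ j.succAbove)) := by
    rw [gv, AlgEquiv.map_det, RingHom.map_det]
    congr 1
    ext1 p q
    simp [finSuccEquiv_X_succ]
  rw [map_mul, h1, map_mul]
  simp only [Matrix.of_apply, map_pow, finSuccEquiv_X_zero, map_neg, map_one]
  rw [← Polynomial.C_mul_X_pow_eq_monomial, map_mul]
  simp only [map_pow, map_neg, map_one]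
  ring

lemma coeff_gv {n : ℕ} {a : Fin (n + 1) → ℕ} (ha : Function.Injective a) (j : Fin (n + 1)) :
    (finSuccEquiv ℂ n (gv a)).coeff (a j) = (-1) ^ (j : ℕ) * gv (a ∘ j.succAbove) := by
  rw [finSuccEquiv_gv, Polynomial.finsetSum_coeff, Finset.sum_eq_single j]
  · simp
  · intro i _ hi
    rw [Polynomial.coeff_monomial, if_neg (fun h => hi (ha h))]
  · simp

lemma gv_ne_zero {n : ℕ} {a : Fin n → ℕ} (ha : StrictMono a) : gv a ≠ 0 := by
  induction n with
  | zero => simp [gv]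
  | succ n ih =>
    intro h
    have h1 := coeff_gv ha.injective 0
    rw [h] at h1
    simp at h1
    exact ih (ha.comp (Fin.strictMono_succ)) h1.symm

lemma neg_one_assoc {R : Type*} [CommRing R] (k : ℕ) (x : R) : Associated ((-1) ^ k * x) x := by
  rcases neg_one_pow_eq_or R k with h | h <;> simp [h]

lemma lead_gv {n : ℕ} {a : Fin (n + 1) → ℕ} (ha : StrictMono a) :
    Associated (finSuccEquiv ℂ n (gv a)).leadingCoeff (gv (a ∘ Fin.castSucc)) := by
  have h1 := coeff_gv ha.injective (Fin.last n)
  have hne : gv (a ∘ (Fin.last n).succAbove) ≠ 0 :=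
    gv_ne_zero (ha.comp (Fin.strictMono_succAbove _))
  have hd : (finSuccEquiv ℂ n (gv a)).natDegree = a (Fin.last n) := by
    apply le_antisymm
    · rw [finSuccEquiv_gv]
      apply Polynomial.natDegree_sum_le_of_forall_le
      intro j _
      exact (Polynomial.natDegree_monomial_le _).trans (ha.monotone (Fin.le_last j))
    · apply Polynomial.le_natDegree_of_ne_zero
      rw [h1]
      exact mul_ne_zero (by simp) hne
  rw [Polynomial.leadingCoeff, hd, h1]
  have := neg_one_assoc (Fin.last n : ℕ) (gv (a ∘ (Fin.last n).succAbove))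
  rwa [show a ∘ (Fin.last n).succAbove = a ∘ Fin.castSucc by rw [Fin.succAbove_last]] at this ⊢

lemma trail_gv {n : ℕ} {a : Fin (n + 1) → ℕ} (ha : StrictMono a) :
    (finSuccEquiv ℂ n (gv a)).trailingCoeff = (gv (a ∘ Fin.succ)) := by
  have h1 := coeff_gv ha.injective 0
  have hne : gv (a ∘ Fin.succ) ≠ 0 :=
    gv_ne_zero (ha.comp (Fin.strictMono_succ))
  have h1t : (finSuccEquiv ℂ n (gv a)).coeff (a 0) = gv (a ∘ Fin.succ) := by
    rw [h1]; simp
  have hd : (finSuccEquiv ℂ n (gv a)).natTrailingDegree = a 0 := by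
    apply le_antisymm
    · apply Polynomial.natTrailingDegree_le_of_ne_zero
      rw [h1t]; exact hne
    · apply Polynomial.le_natTrailingDegree
      · intro h; rw [h] at h1t; exact hne (by simpa using h1t.symm)
      · intro m hm
        rw [finSuccEquiv_gv, Polynomial.finsetSum_coeff]
        apply Finset.sum_eq_zero
        intro j _
        rw [Polynomial.coeff_monomial, if_neg]
        have := ha.monotone (Fin.zero_le j)
        omega
  rw [Polynomial.trailingCoeff, hd, h1t]

lemma exists_perm {n : ℕ} {p q pp qq : Fin n} (h : p ≠ q) (hh : pp ≠ qq) :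
    ∃ s : Equiv.Perm (Fin n), s p = pp ∧ s q = qq := by
  refine ⟨Equiv.swap (Equiv.swap p pp q) qq * Equiv.swap p pp, ?_, ?_⟩
  · simp only [Equiv.Perm.mul_apply, Equiv.swap_apply_left]
    rw [Equiv.swap_apply_of_ne_of_ne _ hh]
    intro h2
    have : Equiv.swap p pp p = Equiv.swap p pp q := by rw [← h2]; simp
    exact h ((Equiv.swap p pp).injective this)
  · simp

/-- `ℓ` divides all minors implies all powers agree (last two variables). -/
lemma pow_eq_aux (n : ℕ) (z : ℂ) (a : Fin (n + 3) → ℕ) (ha : StrictMono a)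
    (h : ∀ i, lf (Fin.last n).castSucc (Fin.last (n + 1)) z ∣ gv (a ∘ Fin.succAbove i)) :
    ∀ i j, z ^ a i = z ^ a j := by
  induction n with
  | zero =>
    have key : ∀ b : Fin 2 → ℕ, lf (Fin.last 0).castSucc (Fin.last (0 + 1)) z ∣ gv b →
        z ^ b 0 = z ^ b 1 := by
      rintro b ⟨Q, hQ⟩
      have := congrArg (eval ![1, z]) hQ
      simp [gv, lf, Matrix.det_fin_two] at this
      linear_combination -this
    have h01 := key _ (h 2)
    have h12 := key _ (h 0)
    have h02 := key _ (h 1)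
    have e1 : (2 : Fin 3).succAbove 0 = 0 := rfl
    have e2 : (2 : Fin 3).succAbove 1 = 1 := rfl
    have e3 : (0 : Fin 3).succAbove 0 = 1 := rfl
    have e4 : (0 : Fin 3).succAbove 1 = 2 := rfl
    simp only [Function.comp, Nat.reduceAdd, Fin.isValue, e1, e2, e3, e4] at h01 h12
    intro i j
    fin_cases i <;> fin_cases j <;> simp_all
  | succ n ih =>
    have red : ∀ (b : Fin (n + 3) → ℕ), StrictMono b →
        lf (Fin.last (n + 1)).castSucc (Fin.last (n + 1 + 1)) z ∣ gv b → ∀ j,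
        lf (Fin.last n).castSucc (Fin.last (n + 1)) z ∣ gv (b ∘ Fin.succAbove j) := by
      intro b hb hd j
      have h1 := map_dvd (finSuccEquiv ℂ (n + 2)) hd
      rw [← Fin.succ_last, ← Fin.succ_last, ← Fin.succ_castSucc, finSuccEquiv_lf,
        Polynomial.C_dvd_iff_dvd_coeff] at h1
      have h2 := h1 (b j)
      rw [coeff_gv hb.injective] at h2
      rw [← Fin.succ_last]
      exact (neg_one_assoc _ _).dvd_iff_dvd_right.1 h2
    have A := ih (a ∘ Fin.castSucc) (ha.comp (Fin.strictMono_castSucc)) (by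
      intro i
      have := red _ (ha.comp (Fin.strictMono_succAbove i.castSucc)) (h i.castSucc) (Fin.last _)
      convert this using 2
      funext j
      simp [Function.comp])
    have B := ih (a ∘ Fin.succ) (ha.comp (Fin.strictMono_succ)) (by
      intro i
      have := red _ (ha.comp (Fin.strictMono_succAbove i.succ)) (h i.succ) 0
      convert this using 2
      funext j
      simp [Function.comp])
    have C0 : ∀ i, z ^ a i = z ^ a 1 := by
      intro i
      refine Fin.cases ?_ (fun i => ?_) i
      · exact A 0 1
      · exact B i 0
    intro i j
    rw [C0 i, C0 j]

lemma dvd_gv_rename {n : ℕ} {P : MvPolynomial (Fin n) ℂ} {a : Fin n → ℕ} (s : Equiv.Perm (Fin n))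
    (h : P ∣ gv a) : rename s P ∣ gv a :=
  (rename_gv a s).dvd_iff_dvd_right.1 (map_dvd (rename s) h)

lemma pow_eq {n : ℕ} {p q : Fin n} (hpq : p ≠ q) (z : ℂ) (a : Fin (n + 1) → ℕ) (ha : StrictMono a)
    (h : ∀ i, lf p q z ∣ gv (a ∘ Fin.succAbove i)) :
    ∀ i j, z ^ a i = z ^ a j := by
  obtain _ | _ | n := n
  · exact p.elim0
  · exact absurd (by omega) hpq
  · obtain ⟨s, hs1, hs2⟩ := exists_perm hpq (Fin.castSucc_lt_last (Fin.last n)).ne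
    apply pow_eq_aux n z a ha
    intro i
    have := dvd_gv_rename s (h i)
    rwa [rename_lf, hs1, hs2] at this

lemma simple_aux (n : ℕ) {z : ℂ} (hz : z ≠ 0) (a : Fin (n + 2) → ℕ) (ha : StrictMono a)
    (h : lf (Fin.last n).castSucc (Fin.last (n + 1)) z ^ 2 ∣ gv a) : False := by
  induction n with
  | zero =>
    obtain ⟨Q, hQ⟩ := h
    have h1 := congrArg (aeval ![(1 : Polynomial ℂ), Polynomial.X]) hQ
    simp [gv, lf, Matrix.det_fin_two] at h1
    have h2 := congrArg (Polynomial.eval z) h1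
    have h3 := congrArg (fun p => Polynomial.eval z (Polynomial.derivative p)) h1
    simp [Polynomial.derivative_mul, Polynomial.derivative_pow] at h2 h3
    have h01 : a 0 < a 1 := ha (by simp)
    obtain ⟨k, hk⟩ : ∃ k, a 1 = k + 1 := ⟨a 1 - 1, by omega⟩
    have h4 : (a 1 : ℂ) * z ^ a 1 = a 0 * z ^ a 0 := by
      have e1 : z ^ a 1 = z ^ (a 1 - 1) * z := by rw [← pow_succ]; congr 1; omega
      rcases Nat.eq_zero_or_pos (a 0) with h0 | h0
      · rw [h0] at h3 ⊢
        rw [e1]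
        simp at h3 ⊢
        tauto
      · have e0 : z ^ a 0 = z ^ (a 0 - 1) * z := by rw [← pow_succ]; congr 1; omega
        rw [e0, e1]
        linear_combination z * h3
    have h5 : z ^ a 1 = z ^ a 0 := by linear_combination h2
    rw [h5] at h4
    have := mul_right_cancel₀ (pow_ne_zero _ hz) h4
    have := Nat.cast_injective this
    omega
  | succ n ih =>
    have h1 := map_dvd (finSuccEquiv ℂ (n + 2)) h
    rw [← Fin.succ_last, ← Fin.succ_last, ← Fin.succ_castSucc, map_pow, finSuccEquiv_lf,
      ← Polynomial.C_pow, Polynomial.C_dvd_iff_dvd_coeff] at h1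
    have h2 := h1 (a 0)
    rw [coeff_gv ha.injective] at h2
    refine ih (a ∘ Fin.succAbove 0) (ha.comp (Fin.strictMono_succAbove _)) ?_
    rw [← Fin.succ_last]
    exact (neg_one_assoc _ _).dvd_iff_dvd_right.1 h2

lemma simple {n : ℕ} {p q : Fin n} (hpq : p ≠ q) {z : ℂ} (hz : z ≠ 0) (a : Fin n → ℕ)
    (ha : StrictMono a) (h : lf p q z ^ 2 ∣ gv a) : False := by
  obtain _ | _ | n := n
  · exact p.elim0
  · exact absurd (by omega) hpq
  · obtain ⟨s, hs1, hs2⟩ := exists_perm hpq (Fin.castSucc_lt_last (Fin.last n)).ne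
    apply simple_aux n hz a ha
    have := dvd_gv_rename s h
    rwa [map_pow, rename_lf, hs1, hs2] at this

lemma lf_dvd_gv {n : ℕ} {p q : Fin n} (hpq : p ≠ q) (z : ℂ) (a : Fin n → ℕ)
    (h : ∀ i j, z ^ a i = z ^ a j) : lf p q z ∣ gv a := by
  have hw : ∀ j, z ^ a j = z ^ a q := fun j => h j q
  have hd : ∀ j, lf p q z ∣ (X q : MvPolynomial (Fin n) ℂ) ^ a j + (-C (z ^ a q)) * X p ^ a j := by
    intro j
    have h1 := sub_dvd_pow_sub_pow (X q : MvPolynomial (Fin n) ℂ) (C z * X p) (a j)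
    rw [mul_pow, ← C_pow, hw j] at h1
    rw [neg_mul, ← sub_eq_add_neg]
    exact h1
  choose r hr using hd
  have key := Matrix.det_updateRow_add_smul_self (Matrix.of fun p q : Fin n =>
    (X p : MvPolynomial (Fin n) ℂ) ^ a q) hpq.symm (-C (z ^ a q))
  rw [gv, ← key]
  have e : (Matrix.of fun p q : Fin n => (X p : MvPolynomial (Fin n) ℂ) ^ a q) q +
      (-C (z ^ a q) : MvPolynomial (Fin n) ℂ) • (Matrix.of fun p q : Fin n => (X p : MvPolynomial (Fin n) ℂ) ^ a q) p
      = lf p q z • r := by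
    funext j
    simp only [Pi.add_apply, Pi.smul_apply, Matrix.of_apply, smul_eq_mul]
    exact hr j
  rw [e, Matrix.det_updateRow_smul]
  exact dvd_mul_right _ _

/-- The classification statement in `n` variables. -/
def Cls (n : ℕ) : Prop :=
  ∀ a : Fin (n + 1) → ℕ, StrictMono a → ∀ P : MvPolynomial (Fin n) ℂ, Irreducible P →
    (∀ i, P ∣ gv (a ∘ Fin.succAbove i)) →
    (∃ j, P ∣ X j) ∨ ∃ p q : Fin n, ∃ z : ℂ, p ≠ q ∧ z ≠ 0 ∧ P ∣ lf p q z

lemma core {n : ℕ} (IH : Cls n)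
    (f : Polynomial (MvPolynomial (Fin n) ℂ) →* MvPolynomial (Fin n) ℂ)
    (hfC : ∀ r, f (Polynomial.C r) = r) (b : Fin (n + 1) → ℕ) (hb : StrictMono b)
    (P : MvPolynomial (Fin (n + 1)) ℂ) (hP : Irreducible P)
    (hPl : ∀ p q z, p ≠ q → z ≠ 0 → ¬ P ∣ lf p q z)
    (hdiv : ∀ i, f (finSuccEquiv ℂ n P) ∣ gv (b ∘ Fin.succAbove i))
    (hPb : P ∣ gv b) (c : Fin n → ℕ) (hc : StrictMono c)
    (hfb : Associated (f (finSuccEquiv ℂ n (gv b))) (gv c))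
    (r : MvPolynomial (Fin n) ℂ) (hr : Irreducible r) (hrP : r ∣ f (finSuccEquiv ℂ n P)) :
    ∃ j, r ∣ X j := by
  rcases IH b hb r hr (fun i => hrP.trans (hdiv i)) with h | ⟨p, q, z, hpq, hz, hd⟩
  · exact h
  · exfalso
    have has : Associated r (lf p q z) := hr.associated_of_dvd (lf_irreducible hpq z) hd
    have hpw := pow_eq hpq z b hb (fun i => has.dvd_iff_dvd_left.1 (hrP.trans (hdiv i)))
    have hpqs : p.succ ≠ q.succ := fun h => hpq (Fin.succ_injective _ h)
    obtain ⟨R, hR⟩ := lf_dvd_gv hpqs z b hpw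
    have hPR : P ∣ R := by
      rw [hR] at hPb
      exact (hP.prime.dvd_or_dvd hPb).resolve_left (hPl _ _ _ hpqs hz)
    have h1 : lf p q z ∣ f (finSuccEquiv ℂ n R) :=
      (has.dvd_iff_dvd_left.1 hrP).trans (map_dvd f (map_dvd (finSuccEquiv ℂ n) hPR))
    have h2 : f (finSuccEquiv ℂ n (gv b)) = lf p q z * f (finSuccEquiv ℂ n R) := by
      rw [hR, map_mul, map_mul, finSuccEquiv_lf, hfC]
    apply simple hpq hz c hc
    rw [← hfb.dvd_iff_dvd_right, h2, sq]
    exact mul_dvd_mul_left _ h1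

lemma X_not_dvd_gv {n : ℕ} {a : Fin (n + 1) → ℕ} (ha : StrictMono a) (h0 : a 0 = 0)
    (j : Fin (n + 1)) : ¬ X j ∣ gv a := by
  intro h
  have h1 := dvd_gv_rename (Equiv.swap j 0) h
  rw [rename_X, Equiv.swap_apply_left] at h1
  have h2 := map_dvd (finSuccEquiv ℂ n) h1
  rw [finSuccEquiv_X_zero, Polynomial.X_dvd_iff] at h2
  have h3 := coeff_gv ha.injective 0
  rw [h0, h2] at h3
  simp at h3
  exact gv_ne_zero (ha.comp (Fin.strictMono_succ)) h3.symm

/-- Restriction to the `k`-th coordinate axis. -/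
noncomputable def ax {n : ℕ} (k : Fin n) : MvPolynomial (Fin n) ℂ →ₐ[ℂ] Polynomial ℂ :=
  aeval (Pi.single k Polynomial.X)

lemma ax_zero {n : ℕ} (P : MvPolynomial (Fin (n + 1)) ℂ) :
    ax 0 P = (finSuccEquiv ℂ n P).map constantCoeff := by
  have : (ax 0 : MvPolynomial (Fin (n + 1)) ℂ →ₐ[ℂ] Polynomial ℂ).toRingHom =
      (Polynomial.mapRingHom constantCoeff).comp
        (finSuccEquiv ℂ n).toAlgHom.toRingHom := by
    apply MvPolynomial.ringHom_ext
    · intro r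
      simp [ax, finSuccEquiv_apply, Polynomial.algebraMap_eq]
    · intro i
      refine Fin.cases ?_ (fun i => ?_) i
      · simp [ax, finSuccEquiv_X_zero]
      · simp [ax, finSuccEquiv_X_succ]
  exact congrArg (fun g => g P) this

lemma ax_succ {n : ℕ} (k : Fin n) (P : MvPolynomial (Fin (n + 1)) ℂ) :
    ax k.succ P = ax k ((finSuccEquiv ℂ n P).coeff 0) := by
  have : (ax k.succ : MvPolynomial (Fin (n + 1)) ℂ →ₐ[ℂ] Polynomial ℂ).toRingHom =
      ((ax k).toRingHom.comp Polynomial.constantCoeff).comp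
        (finSuccEquiv ℂ n).toAlgHom.toRingHom := by
    apply MvPolynomial.ringHom_ext
    · intro r
      simp [ax, finSuccEquiv_apply, Polynomial.algebraMap_eq]
    · intro i
      refine Fin.cases ?_ (fun i => ?_) i
      · simp [ax, finSuccEquiv_X_zero]
      · simp [ax, finSuccEquiv_X_succ, Pi.single_apply]
  exact congrArg (fun g => g P) this

lemma ax_rename {n : ℕ} (k : Fin (n + 1)) (P : MvPolynomial (Fin (n + 1)) ℂ) :
    ax 0 (rename (Equiv.swap k 0) P) = ax k P := by
  rw [ax, aeval_rename, ax]
  congr 2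
  funext i
  by_cases h : i = k
  · subst h; simp
  · have : Equiv.swap k 0 i ≠ 0 := by
      intro h2
      apply h
      exact (Equiv.swap k 0).injective (h2.trans (Equiv.swap_apply_left k 0).symm)
    simp [h, this]

/-- Hypotheses of the inductive step. -/
structure Hyp {n : ℕ} (a : Fin (n + 2) → ℕ) (P : MvPolynomial (Fin (n + 1)) ℂ) : Prop where
  irr : Irreducible P
  dvd : ∀ i, P ∣ gv (a ∘ Fin.succAbove i)
  nlf : ∀ p q z, p ≠ q → z ≠ 0 → ¬ P ∣ lf p q z

lemma Hyp.rename {n : ℕ} {a : Fin (n + 2) → ℕ} {P : MvPolynomial (Fin (n + 1)) ℂ} (h : Hyp a P)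
    (s : Equiv.Perm (Fin (n + 1))) : Hyp a (rename s P) := by
  refine ⟨?_, fun i => dvd_gv_rename s (h.dvd i), ?_⟩
  · exact (MulEquiv.irreducible_iff (renameEquiv ℂ s)).2 h.irr
  · intro p q z hpq hz hd
    have := map_dvd (MvPolynomial.rename s.symm) hd
    rw [rename_lf, rename_rename] at this
    simp only [Equiv.symm_comp_self, rename_id, AlgHom.id_apply] at this
    exact h.nlf _ _ z (fun h => hpq (s.symm.injective h)) hz this

lemma lead_unit {n : ℕ} (hn : 1 ≤ n) (IH : Cls n) {a : Fin (n + 2) → ℕ} (ha : StrictMono a)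
    (ha0 : a 0 = 0) {P : MvPolynomial (Fin (n + 1)) ℂ} (h : Hyp a P) :
    IsUnit (finSuccEquiv ℂ n P).leadingCoeff := by
  by_contra hu
  have hne : (finSuccEquiv ℂ n P).leadingCoeff ≠ 0 := by
    rw [Ne, Polynomial.leadingCoeff_eq_zero]
    simpa using h.irr.ne_zero
  obtain ⟨r, hr, hrd⟩ := WfDvdMonoid.exists_irreducible_factor hu hne
  have hb : StrictMono (a ∘ Fin.castSucc) := ha.comp Fin.strictMono_castSucc
  have hdiv : ∀ i, (finSuccEquiv ℂ n P).leadingCoeff ∣ gv ((a ∘ Fin.castSucc) ∘ Fin.succAbove i) := by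
    intro i
    have h1 := map_dvd Polynomial.leadingCoeffHom (map_dvd (finSuccEquiv ℂ n) (h.dvd i.castSucc))
    have h2 := (lead_gv (ha.comp (Fin.strictMono_succAbove i.castSucc))).dvd_iff_dvd_right.1 h1
    change (finSuccEquiv ℂ n P).leadingCoeff ∣ _ at h2
    convert h2 using 2
    funext j
    simp [Function.comp]
  obtain ⟨j, hj⟩ := core IH Polynomial.leadingCoeffHom (by simp) (a ∘ Fin.castSucc) hb P h.irr h.nlf
    hdiv (by have := h.dvd (Fin.last _); rwa [Fin.succAbove_last] at this)
    _ (hb.comp Fin.strictMono_castSucc) (lead_gv hb) r hr hrd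
  obtain ⟨m, rfl⟩ : ∃ m, n = m + 1 := ⟨n - 1, by omega⟩
  have has := hr.associated_of_dvd (X_prime (i := j) (R := ℂ)).irreducible hj
  refine X_not_dvd_gv (hb.comp (Fin.strictMono_succAbove (Fin.last _))) ?_ j
    ((has.dvd_iff_dvd_left.1 hrd).trans (hdiv (Fin.last _)))
  rw [Fin.succAbove_last]
  exact ha0

lemma ax_zero_facts {n : ℕ} (hn : 1 ≤ n) (IH : Cls n) {a : Fin (n + 2) → ℕ} (ha : StrictMono a)
    (ha0 : a 0 = 0) {P : MvPolynomial (Fin (n + 1)) ℂ} (h : Hyp a P) :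
    ax 0 P ≠ 0 ∧ (ax 0 P).natDegree ≠ 0 := by
  have hu := lead_unit hn IH ha ha0 h
  have hc : constantCoeff (finSuccEquiv ℂ n P).leadingCoeff ≠ 0 := (hu.map constantCoeff).ne_zero
  rw [ax_zero]
  constructor
  · intro h0
    have := congrArg (fun p => p.coeff (finSuccEquiv ℂ n P).natDegree) h0
    simp only [Polynomial.coeff_map, Polynomial.coeff_zero] at this
    exact hc this
  · rw [Polynomial.natDegree_map_of_leadingCoeff_ne_zero _ hc]
    intro h0
    apply h.irr.not_isUnit
    have h1 := Polynomial.eq_C_of_natDegree_eq_zero h0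
    have h2 : IsUnit (finSuccEquiv ℂ n P) := by
      rw [h1]
      rw [Polynomial.leadingCoeff, h0] at hu
      exact hu.map Polynomial.C
    exact (MulEquiv.isUnit_map (finSuccEquiv ℂ n)).1 h2

lemma ax_facts {n : ℕ} (hn : 1 ≤ n) (IH : Cls n) {a : Fin (n + 2) → ℕ} (ha : StrictMono a)
    (ha0 : a 0 = 0) {P : MvPolynomial (Fin (n + 1)) ℂ} (h : Hyp a P) (k : Fin (n + 1)) :
    ax k P ≠ 0 ∧ (ax k P).natDegree ≠ 0 := by
  rw [← ax_rename]
  exact ax_zero_facts hn IH ha ha0 (h.rename _)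

lemma trailingCoeff_const {R : Type*} [CommRing R] (r : R) :
    (Polynomial.C r).trailingCoeff = r := by
  simp [Polynomial.trailingCoeff]

/-- Trailing coefficient as a monoid homomorphism. -/
noncomputable def trailHom (n : ℕ) :
    Polynomial (MvPolynomial (Fin n) ℂ) →* MvPolynomial (Fin n) ℂ where
  toFun := Polynomial.trailingCoeff
  map_one' := by
    have := trailingCoeff_const (1 : MvPolynomial (Fin n) ℂ)
    simpa using this
  map_mul' := Polynomial.trailingCoeff_mul

lemma no_hyp {n : ℕ} (hn : 2 ≤ n) (IH : Cls n) {a : Fin (n + 2) → ℕ} (ha : StrictMono a)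
    (ha0 : a 0 = 0) {P : MvPolynomial (Fin (n + 1)) ℂ} (h : Hyp a P) : False := by
  have hax := ax_facts (by omega) IH ha ha0 h
  set t := (finSuccEquiv ℂ n P).coeff 0 with ht
  have ht0 : t ≠ 0 := by
    intro h0
    have := (hax (Fin.succ ⟨0, by omega⟩)).1
    rw [ax_succ, ← ht, h0] at this
    simp at this
  have htr : (finSuccEquiv ℂ n P).trailingCoeff = t := by
    rw [Polynomial.trailingCoeff, Nat.le_zero.1 (Polynomial.natTrailingDegree_le_of_ne_zero ht0)]
  have hu : IsUnit t := by
    by_contra hu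
    obtain ⟨r, hr, hrd⟩ := WfDvdMonoid.exists_irreducible_factor hu ht0
    have hb : StrictMono (a ∘ Fin.succ) := ha.comp Fin.strictMono_succ
    obtain ⟨j, hj⟩ := core IH (trailHom n) trailingCoeff_const (a ∘ Fin.succ) hb P h.irr h.nlf
      (by
        intro i
        have h1 := map_dvd (trailHom n) (map_dvd (finSuccEquiv ℂ n) (h.dvd i.succ))
        have h2 : trailHom n (finSuccEquiv ℂ n (gv (a ∘ i.succ.succAbove))) =
          gv ((a ∘ i.succ.succAbove) ∘ Fin.succ) :=
            trail_gv (ha.comp (Fin.strictMono_succAbove i.succ))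
        rw [h2] at h1
        convert h1 using 2
        funext j
        simp [Function.comp])
      (by have := h.dvd 0; rwa [Fin.succAbove_zero] at this)
      _ (hb.comp Fin.strictMono_succ) (Associated.of_eq (trail_gv hb)) r hr
      (by change r ∣ (finSuccEquiv ℂ n P).trailingCoeff; rwa [htr])
    have has := hr.associated_of_dvd (X_prime (i := j) (R := ℂ)).irreducible hj
    have hXt : X j ∣ t := has.dvd_iff_dvd_left.1 hrd
    obtain ⟨k, hk⟩ : ∃ k : Fin n, j ≠ k := by
      have : Nontrivial (Fin n) := Fin.nontrivial_iff_two_le.2 hn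
      obtain ⟨k, hk⟩ := exists_ne j
      exact ⟨k, hk.symm⟩
    have h3 := map_dvd (ax k) hXt
    have h4 : ax k (X j) = 0 := by simp [ax, hk]
    rw [h4, zero_dvd_iff, ht, ← ax_succ] at h3
    exact (hax _).1 h3
  apply (hax (Fin.succ ⟨0, by omega⟩)).2
  rw [ax_succ, ← ht]
  exact Polynomial.natDegree_eq_zero_of_isUnit (hu.map (ax (⟨0, by omega⟩ : Fin n)))

lemma gv_shift {n : ℕ} (a : Fin n → ℕ) (c : ℕ) :
    gv (fun i => a i + c) = (∏ p, X p ^ c) * gv a := by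
  rw [gv, gv, ← Matrix.det_mul_column]
  congr 1
  ext1 p q
  simp [pow_add, mul_comm]

lemma cls_step {n : ℕ} (hn : 2 ≤ n) (IH : Cls n) : Cls (n + 1) := by
  intro a ha P hP hd
  by_contra! hcon
  obtain ⟨hX, hl⟩ := hcon
  have hmin : ∀ i, a 0 ≤ a i := fun i => ha.monotone (Fin.zero_le i)
  refine no_hyp hn IH (a := fun i => a i - a 0) (P := P) ?_ (by simp) ⟨hP, ?_, hl⟩
  · intro i j hij
    have := ha hij
    have := hmin i
    change a i - a 0 < a j - a 0
    omega
  · intro i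
    have h1 := hd i
    have e : a ∘ i.succAbove = fun k => ((fun i => a i - a 0) ∘ i.succAbove) k + a 0 := by
      funext k
      have := hmin (i.succAbove k)
      simp only [Function.comp]
      omega
    rw [e, gv_shift] at h1
    refine (hP.prime.dvd_or_dvd h1).resolve_left ?_
    intro h2
    obtain ⟨j, _, hj⟩ := (hP.prime.dvd_finsetProd_iff _).1 h2
    exact hX j (hP.prime.dvd_of_dvd_pow hj)

lemma cls_two : Cls 2 := by
  intro a ha P hP hd
  have h01 : a 0 < a 1 := ha (by decide)
  have h1 := hd 2
  have e : gv (a ∘ Fin.succAbove 2) =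
      X 0 ^ a 0 * X 1 ^ a 0 * (X 1 ^ (a 1 - a 0) - X 0 ^ (a 1 - a 0)) := by
    have e1 : (2 : Fin 3).succAbove 0 = 0 := rfl
    have e2 : (2 : Fin 3).succAbove 1 = 1 := rfl
    obtain ⟨d, hdd⟩ := Nat.exists_eq_add_of_lt h01
    have : a 1 = a 0 + (a 1 - a 0) := by omega
    simp only [gv, Matrix.det_fin_two, Matrix.of_apply, Function.comp, e1, e2]
    conv_lhs => rw [this]
    rw [pow_add, pow_add]
    ring
  rw [e] at h1
  have hpos : 0 < a 1 - a 0 := by omega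
  rcases hP.prime.dvd_or_dvd h1 with h2 | h2
  · left
    rcases hP.prime.dvd_or_dvd h2 with h3 | h3
    · exact ⟨0, hP.prime.dvd_of_dvd_pow h3⟩
    · exact ⟨1, hP.prime.dvd_of_dvd_pow h3⟩
  · right
    have hprim := (Complex.isPrimitiveRoot_exp (a 1 - a 0) hpos.ne').map_of_injective
      (MvPolynomial.C_injective (Fin 2) ℂ)
    rw [hprim.pow_sub_pow_eq_prod_sub_mul _ _ hpos] at h2
    obtain ⟨m, hm, hmd⟩ := (hP.prime.dvd_finsetProd_iff _).1 h2
    rw [Polynomial.mem_nthRootsFinset hpos] at hm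
    have hmu : IsUnit m := IsUnit.of_pow_eq_one hm hpos.ne'
    obtain ⟨z, hz, rfl⟩ := isUnit_iff_eq_C_of_isReduced.1 hmu
    exact ⟨0, 1, z, by decide, hz.ne_zero, hmd⟩

lemma cls_four : Cls 4 := cls_step (by norm_num) (cls_step le_rfl cls_two)

lemma row_relation {n : ℕ} (a : Fin (n + 1) → ℕ) (r : Fin n) :
    ∑ j : Fin (n + 1), (-1) ^ (j : ℕ) * (X r : MvPolynomial (Fin n) ℂ) ^ a j *
      gv (a ∘ j.succAbove) = 0 := by
  let N : Matrix (Fin (n + 1)) (Fin (n + 1)) (MvPolynomial (Fin n) ℂ) :=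
    Matrix.of fun p q => (Fin.cons (X r) X : Fin (n + 1) → MvPolynomial (Fin n) ℂ) p ^ a q
  have h0 : N.det = 0 := by
    apply Matrix.det_zero_of_row_eq (Fin.succ_ne_zero r).symm
    funext q
    simp [N]
  rw [Matrix.det_succ_row_zero] at h0
  rw [← h0]
  refine Finset.sum_congr rfl fun j _ => ?_
  congr 1

lemma degreeOf_zero_of_dvd {n : ℕ} {P : MvPolynomial (Fin (n + 1)) ℂ} {r : Fin (n + 1)}
    {G : MvPolynomial (Fin n) ℂ} (hG : G ≠ 0) (h : P ∣ rename r.succAbove G) :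
    degreeOf r P = 0 := by
  obtain ⟨Q, hQ⟩ := h
  have hne : rename r.succAbove G ≠ 0 := by
    rw [Ne, map_eq_zero_iff _ (rename_injective _ Fin.succAbove_right_injective)]
    exact hG
  have hd : degreeOf r (rename r.succAbove G) = 0 := by
    by_contra hcon
    rw [← Ne, ← Nat.pos_iff_ne_zero] at hcon
    have h1 : r ∈ (rename r.succAbove G).vars := by
      by_contra h2
      rw [vars_def, Multiset.mem_toFinset] at h2
      rw [degreeOf_def, Multiset.count_eq_zero_of_notMem h2] at hcon
      omega
    have h2 := vars_rename _ _ h1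
    obtain ⟨x, _, hx⟩ := Finset.mem_image.1 h2
    exact Fin.succAbove_ne r x hx
  rw [hQ] at hne hd
  rw [degreeOf_mul_eq (left_ne_zero_of_mul hne) (right_ne_zero_of_mul hne)] at hd
  omega

lemma isUnit_of_degreeOf {n : ℕ} {P : MvPolynomial (Fin n) ℂ} (hP : P ≠ 0)
    (h : ∀ r, degreeOf r P = 0) : IsUnit P := by
  have h1 : P.totalDegree = 0 := by
    rw [totalDegree_eq_zero_iff]
    intro m hm i
    have := monomial_le_degreeOf i hm
    rw [h i] at this
    omega
  rw [totalDegree_eq_zero_iff_eq_C] at h1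
  rw [h1]
  refine IsUnit.map C (IsUnit.mk0 _ ?_)
  intro h0
  rw [h0] at h1
  exact hP (by simpa using h1)

lemma all_minors {a : Fin 5 → ℕ} (ha : StrictMono a) {P : MvPolynomial (Fin 4) ℂ}
    (hP : Irreducible P) (h3 : P ∣ gv (a ∘ Fin.succAbove 3)) (h4 : P ∣ gv (a ∘ Fin.succAbove 4)) :
    ∀ i, P ∣ gv (a ∘ Fin.succAbove i) := by
  let I := Ideal.span {P}
  have hI : I.IsPrime := (Ideal.span_singleton_prime hP.ne_zero).2 hP.prime
  let mk := Ideal.Quotient.mk I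
  have hmk : ∀ x, mk x = 0 ↔ P ∣ x := fun x => by
    rw [Ideal.Quotient.eq_zero_iff_mem, Ideal.mem_span_singleton]
  let e : Fin 3 → Fin 5 := fun i => i.castSucc.castSucc
  have he : StrictMono e := Fin.strictMono_castSucc.comp Fin.strictMono_castSucc
  by_cases hE : ∀ r : Fin 4, P ∣ rename r.succAbove (gv (a ∘ e))
  · exfalso
    apply hP.not_isUnit
    exact isUnit_of_degreeOf hP.ne_zero
      fun r => degreeOf_zero_of_dvd (gv_ne_zero (ha.comp he)) (hE r)
  · push Not at hE
    obtain ⟨r, hr⟩ := hE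
    let A : Matrix (Fin 3) (Fin 3) (MvPolynomial (Fin 4) ℂ ⧸ I) :=
      Matrix.of fun p q => mk (X (r.succAbove p) ^ a (e q))
    let v : Fin 3 → MvPolynomial (Fin 4) ℂ ⧸ I :=
      fun j => mk ((-1) ^ (j : ℕ) * gv (a ∘ (e j).succAbove))
    have hA : A.det ≠ 0 := by
      intro h0
      apply hr
      rw [← hmk, gv, AlgHom.map_det, RingHom.map_det, ← h0]
      congr 1
      ext1 p q
      simp [A]
    have hv : v = 0 := by
      apply Matrix.eq_zero_of_mulVec_eq_zero hA
      funext p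
      have h1 := congrArg mk (row_relation a (r.succAbove p))
      rw [map_sum, Fin.sum_univ_castSucc, Fin.sum_univ_castSucc] at h1
      have z3 : mk (gv (a ∘ Fin.succAbove 3)) = 0 := (hmk _).2 h3
      have z4 : mk (gv (a ∘ Fin.succAbove 4)) = 0 := (hmk _).2 h4
      rw [map_mul, map_mul mk _ (gv (a ∘ (Fin.last 4).succAbove))] at h1
      rw [show (Fin.last 4) = 4 from rfl, z4, show (Fin.castSucc (Fin.last 3)) = 3 from rfl, z3,
        mul_zero, mul_zero, add_zero, add_zero, map_zero] at h1
      rw [Pi.zero_apply, ← h1]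
      simp only [Matrix.mulVec, dotProduct, A, v, Matrix.of_apply]
      refine Finset.sum_congr rfl fun j _ => ?_
      rw [← map_mul]
      congr 1
      simp only [e, Fin.val_castSucc]
      ring
    intro i
    have hvj : ∀ j : Fin 3, P ∣ gv (a ∘ (e j).succAbove) := by
      intro j
      have := congrFun hv j
      simp only [v, Pi.zero_apply] at this
      rw [hmk] at this
      exact (neg_one_assoc _ _).dvd_iff_dvd_right.1 this
    fin_cases i
    · exact hvj 0
    · exact hvj 1
    · exact hvj 2
    · exact h3
    · exact h4

lemma genVandDet_eq (a b c : ℕ) : genVandDet a b c = gv ![0, a, b, c] := by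
  rw [genVandDet, gv]
  congr 1
  ext1 p q
  fin_cases q <;> simp

lemma lf_dvd_Vand {p q : Fin 4} (hpq : p ≠ q) : lf p q 1 ∣ Vand := by
  have key : ∀ p q : Fin 4, p < q → (X q - X p : MvPolynomial (Fin 4) ℂ) ∣ Vand := by
    intro p q h
    have h1 := Finset.dvd_prod_of_mem (fun q : Fin 4 => if p < q then
      (X q - X p : MvPolynomial (Fin 4) ℂ) else 1) (Finset.mem_univ q)
    have h2 := Finset.dvd_prod_of_mem (fun p : Fin 4 => ∏ q : Fin 4, if p < q then
      (X q - X p : MvPolynomial (Fin 4) ℂ) else 1) (Finset.mem_univ p)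
    have h3 := h1.trans h2
    simp only [if_pos h] at h3
    exact h3
  rcases lt_or_gt_of_ne hpq with h | h
  · simpa [lf] using key p q h
  · have := key q p h
    rw [← neg_sub, neg_dvd] at this
    simpa [lf] using this

/-- Coprimality of the two Schur polynomials.  If
`0 < i₁ < i₂ < i₃ < i₄` with `gcd(i₁,i₂,i₃,i₄) = 1` and `V·S = D_{i₁,i₂,i₃}`,
`V·S' = D_{i₁,i₂,i₄}`, then `S` and `S'` are relatively prime. -/
theorem schur_polynomials_coprime
    (i1 i2 i3 i4 : ℕ) (h1 : 0 < i1) (h12 : i1 < i2) (h23 : i2 < i3) (h34 : i3 < i4)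
    (hgcd : Nat.gcd (Nat.gcd (Nat.gcd i1 i2) i3) i4 = 1)
    (S S' : MvPolynomial (Fin 4) ℂ)
    (hS : Vand * S = genVandDet i1 i2 i3)
    (hS' : Vand * S' = genVandDet i1 i2 i4) :
    IsRelPrime S S' := by
  let a : Fin 5 → ℕ := ![0, i1, i2, i3, i4]
  have ha : StrictMono a := by
    rw [Fin.strictMono_iff_lt_succ]
    intro i
    fin_cases i <;> simp [a] <;> assumption
  have e4 : a ∘ Fin.succAbove 4 = ![0, i1, i2, i3] := by
    funext j; fin_cases j <;> rfl
  have e3 : a ∘ Fin.succAbove 3 = ![0, i1, i2, i4] := by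
    funext j; fin_cases j <;> rfl
  have hm4 : StrictMono (![0, i1, i2, i3] : Fin 4 → ℕ) := e4 ▸ ha.comp (Fin.strictMono_succAbove _)
  rw [genVandDet_eq] at hS hS'
  apply WfDvdMonoid.isRelPrime_of_no_irreducible_factors
  · rintro ⟨h0, _⟩
    rw [h0, mul_zero] at hS
    exact gv_ne_zero hm4 hS.symm
  · intro P hP hPS hPS'
    have hd4 : P ∣ gv (a ∘ Fin.succAbove 4) := by
      rw [e4, ← hS]; exact hPS.mul_left _
    have hd3 : P ∣ gv (a ∘ Fin.succAbove 3) := by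
      rw [e3, ← hS']; exact hPS'.mul_left _
    have hall := all_minors ha hP hd3 hd4
    rcases cls_four a ha P hP hall with ⟨j, hj⟩ | ⟨p, q, z, hpq, hz, hl⟩
    · have has := hP.associated_of_dvd (X_prime (i := j) (R := ℂ)).irreducible hj
      rw [e4] at hd4
      exact X_not_dvd_gv hm4 rfl j (has.dvd_iff_dvd_left.1 hd4)
    · have has := hP.associated_of_dvd (lf_irreducible hpq z) hl
      have hpw := pow_eq hpq z a ha (fun i => has.dvd_iff_dvd_left.1 (hall i))
      have k1 : z ^ i1 = 1 := by simpa [a] using hpw 1 0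
      have k2 : z ^ i2 = 1 := by simpa [a] using hpw 2 0
      have k3 : z ^ i3 = 1 := by simpa [a] using hpw 3 0
      have k4 : z ^ i4 = 1 := by simpa [a] using hpw 4 0
      have hz1 : z = 1 := by
        rw [← orderOf_dvd_iff_pow_eq_one] at k1 k2 k3 k4
        have := Nat.dvd_gcd (Nat.dvd_gcd (Nat.dvd_gcd k1 k2) k3) k4
        rw [hgcd, Nat.dvd_one, orderOf_eq_one_iff] at this
        exact this
      subst hz1
      apply simple hpq one_ne_zero _ hm4
      rw [← hS, sq]
      exact mul_dvd_mul (lf_dvd_Vand hpq) (has.dvd_iff_dvd_left.1 hPS)
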